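/- Let x, y, z be nonempty words over a linearly ordered alphabet such that xy and yz are Lyndon words. Then xyyz and xyz are Lyndon words, and xy < xyyz < xyz < yz in lexicographic order. -/

import Mathlib

/-!
If `u < v` and `v` is not longer than `u`, then `u` is not a prefix of `v`, so the two words differ
at a letter and the inequality survives appending anything on either side (`lex_append_append`).
In particular this applies to a Lyndon word `u` and a nonempty proper suffix `v` of it. Hence `p ++ q`
is Lyndon as soon as `p` is Lyndon and `p ++ q` is smaller than every nonempty suffix of `q`
(`IsLyndon.append`): the other proper suffixes are `v ++ q` with `v` a proper suffix of `p`.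

From `xy < y` one gets `xyz < yz`, and from `yz < z` one gets `xyyz < xyz`. As `yz` is Lyndon, both
`xyz` and `xyyz` are then smaller than every nonempty suffix of `yz`, and the criterion applies
with `p = xy` and `q = z` or `q = yz`.
-/

/-- A word `w` over a linearly ordered alphabet is a Lyndon word if it is nonempty
and strictly lexicographically smaller than each of its nonempty proper suffixes. -/
def IsLyndon {α : Type*} [LinearOrder α] (w : List α) : Prop :=
  w ≠ [] ∧ ∀ u v : List α, w = u ++ v → u ≠ [] → v ≠ [] → List.Lex (· < ·) w v

theorem lex_append_append {α : Type*} [LinearOrder α] {u v : List α}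
    (h : List.Lex (· < ·) u v) (hl : v.length ≤ u.length) (p q : List α) :
    List.Lex (· < ·) (u ++ p) (v ++ q) := by
  induction h with
  | nil => simp at hl
  | rel h => exact List.Lex.rel h
  | cons _ ih => exact List.Lex.cons (ih (by simpa using hl))

theorem lex_trans {α : Type*} [LinearOrder α] {u v w : List α}
    (h : List.Lex (· < ·) u v) (h' : List.Lex (· < ·) v w) : List.Lex (· < ·) u w :=
  lt_trans (α := List α) h h'

theorem IsLyndon.append {α : Type*} [LinearOrder α] {p q : List α} (hp : IsLyndon p)
    (h : ∀ u v : List α, q = u ++ v → v ≠ [] → List.Lex (· < ·) (p ++ q) v) :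
    IsLyndon (p ++ q) := by
  refine ⟨by simp [hp.1], fun u v huv hu hv => ?_⟩
  rcases List.append_eq_append_iff.1 huv with ⟨s, -, hs⟩ | ⟨s, hs, rfl⟩
  · exact h s v hs hv
  · by_cases hs0 : s = []
    · subst hs0
      exact h [] q rfl hv
    · exact lex_append_append (hp.2 u s hs hu hs0) (by simp [hs]) q q

theorem lyndon_xy_yz {α : Type*} [LinearOrder α] (x y z : List α)
    (hx : x ≠ []) (hy : y ≠ []) (hz : z ≠ [])
    (hxy : IsLyndon (x ++ y)) (hyz : IsLyndon (y ++ z)) :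
    IsLyndon (x ++ y ++ y ++ z) ∧ IsLyndon (x ++ y ++ z) ∧
      List.Lex (· < ·) (x ++ y) (x ++ y ++ y ++ z) ∧
      List.Lex (· < ·) (x ++ y ++ y ++ z) (x ++ y ++ z) ∧
      List.Lex (· < ·) (x ++ y ++ z) (y ++ z) := by
  have h3 : List.Lex (· < ·) (x ++ y ++ z) (y ++ z) :=
    lex_append_append (hxy.2 x y rfl hx hy) (by simp) z z
  have h2 : List.Lex (· < ·) (x ++ y ++ (y ++ z)) (x ++ y ++ z) :=
    List.Lex.append_left _ (hyz.2 y z rfl hy hz) (x ++ y)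
  have h1 : List.Lex (· < ·) (x ++ y) (x ++ y ++ (y ++ z)) := by
    obtain ⟨a, t, ht⟩ := List.exists_cons_of_ne_nil hyz.1
    have := List.Lex.append_left (· < ·) (List.Lex.nil (a := a) (l := t)) (x ++ y)
    rwa [List.append_nil, ← ht] at this
  have h4 : IsLyndon (x ++ y ++ (y ++ z)) := by
    refine hxy.append fun u v huv hv => ?_
    by_cases hu : u = []
    · subst hu
      rw [List.nil_append] at huv
      rw [← huv]
      exact lex_trans h2 h3
    · exact lex_trans (lex_trans h2 h3) (hyz.2 u v huv hu hv)
  have h5 : IsLyndon (x ++ y ++ z) :=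
    hxy.append fun u v huv hv =>
      lex_trans h3 (hyz.2 (y ++ u) v (by rw [huv, List.append_assoc]) (by simp [hy]) hv)
  rw [List.append_assoc (x ++ y) y z]
  exact ⟨h4, h5, h1, h2, h3⟩
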